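/- arXiv:2308.10499 — 2 statements merged into one kernel-verified Lean document; each statement's English description precedes it below -/
import Mathlib

section
/- Let π be a ranking of [d], let G₁,…,G_g be a partition of [d] into groups, let ᾱ, β̄ ∈ ([0,1]∩ℚ)^g, k ∈ [d], and a block length b with α_i·b and β_i·b integers for all i, and suppose at least one (ᾱ,β̄)-block-k-fair ranking exists. Then there exists a ranking π* that is (ᾱ,β̄)-block-k-fair, minimizes the Kendall tau distance K(π,·) over all (ᾱ,β̄)-block-k-fair rankings, and preserves intra-group orderings: for each group G_i and any two elements a ≠ b ∈ G_i, a <_{π*} b if and only if a <_π b. -/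
/-!
A fair ranking `σ` closest to `π` already preserves the intra-group orderings. Suppose `a` and `c`
lie in the same group, `π` puts `a` before `c`, and `σ` puts `c` before `a`. Exchanging `a` and `c`
in `σ` changes no prefix count of any group (`prefCount_swap`), so fairness survives, while the
Kendall tau distance to `π` strictly drops (`kendall_swap_lt`), contradicting minimality.
-/

/-- Kendall tau distance between two rankings of `[d]`. -/
def kendall {d : ℕ} (π₁ π₂ : Equiv.Perm (Fin d)) : ℕ :=
  (Finset.univ.filter fun p : Fin d × Fin d =>
    π₁.symm p.1 < π₁.symm p.2 ∧ π₂.symm p.2 < π₂.symm p.1).card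

/-- Number of elements of the group `G` among the first `ℓ` positions of the ranking `σ`. -/
def prefCount {d : ℕ} (σ : Equiv.Perm (Fin d)) (G : Finset (Fin d)) (ℓ : ℕ) : ℕ :=
  (Finset.univ.filter fun i : Fin d => i.val < ℓ ∧ σ i ∈ G).card

/-- `(ᾱ,β̄)`-block-`k`-fair ranking with block length `b`. -/
def BlockFair {d g : ℕ} (σ : Equiv.Perm (Fin d)) (G : Fin g → Finset (Fin d))
    (α β : Fin g → ℝ) (k b : ℕ) : Prop :=
  ∀ ℓ : ℕ, k ≤ ℓ → ℓ ≤ d → b ∣ ℓ → ∀ i : Fin g,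
    α i * (ℓ : ℝ) ≤ (prefCount σ (G i) ℓ : ℝ) ∧ (prefCount σ (G i) ℓ : ℝ) ≤ β i * (ℓ : ℝ)

lemma prefCount_swap {d : ℕ} (σ : Equiv.Perm (Fin d)) (G : Finset (Fin d)) (a c : Fin d)
    (h : a ∈ G ↔ c ∈ G) (l : ℕ) :
    prefCount (Equiv.swap a c * σ) G l = prefCount σ G l := by
  unfold prefCount
  refine congrArg Finset.card (Finset.filter_congr fun i _ => ?_)
  have : Equiv.swap a c (σ i) ∈ G ↔ σ i ∈ G := by
    rw [Equiv.swap_apply_def]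
    split_ifs with h1 h2
    · rw [h1, h]
    · rw [h2, h]
    · rfl
  rw [Equiv.Perm.mul_apply, this]

/-- Exchanging the two members of an inverted pair, adjacent or not, strictly decreases the Kendall
tau distance: each newly created inversion `(x, y)` is sent by the transposition of `a` and `c` to
an inversion that disappears, and the inversion `(a, c)`, which disappears too, is not hit. -/
lemma kendall_swap_lt {d : ℕ} (π σ : Equiv.Perm (Fin d)) (a c : Fin d)
    (hπ : π.symm a < π.symm c) (hσ : σ.symm c < σ.symm a) :
    kendall π (Equiv.swap a c * σ) < kendall π σ := by
  classical
  have hs : ∀ z, (Equiv.swap a c * σ).symm z = σ.symm (Equiv.swap a c z) := by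
    intro z
    rw [Equiv.symm_apply_eq]
    simp
  unfold kendall
  simp only [hs]
  set S' := Finset.univ.filter fun p : Fin d × Fin d => π.symm p.1 < π.symm p.2 ∧
    σ.symm (Equiv.swap a c p.2) < σ.symm (Equiv.swap a c p.1) with hS'
  set S := Finset.univ.filter fun p : Fin d × Fin d => π.symm p.1 < π.symm p.2 ∧
    σ.symm p.2 < σ.symm p.1 with hS
  have hac : (a, c) ∈ S \ S' := by
    simp [hS, hS', hπ, hσ, hσ.le]
  have hle : (S' \ S).card ≤ ((S \ S').erase (a, c)).card := by
    apply Finset.card_le_card_of_injOn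
      (fun p => (Equiv.swap a c p.1, Equiv.swap a c p.2))
    · -- A new inversion `(x, y)` contains exactly one of `a`, `c`, and its other entry lies
      -- between `c` and `a` in `σ`.
      rintro ⟨x, y⟩ hp
      simp only [hS, hS', Finset.coe_sdiff, Finset.coe_erase, Set.mem_sdiff, Finset.mem_coe,
        Finset.mem_filter, Finset.mem_univ, true_and, Set.mem_singleton_iff, Prod.mk.injEq,
        Equiv.swap_apply_self] at hp ⊢
      obtain ⟨⟨h1, h2⟩, h3⟩ := hp
      simp only [Equiv.swap_apply_def] at h2 ⊢
      grind
    · rintro ⟨x, y⟩ _ ⟨x', y'⟩ _ h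
      simpa using h
  have h1 := Finset.card_erase_lt_of_mem hac
  have h2 := Finset.card_sdiff_add_card_inter S S'
  have h3 := Finset.card_sdiff_add_card_inter S' S
  rw [Finset.inter_comm] at h3
  omega

/-- If some `(ᾱ,β̄)`-block-`k`-fair ranking exists (for a block length `b` making all
`αᵢ·b` and `βᵢ·b` integral), then there is a closest (w.r.t. Kendall tau distance to `π`)
`(ᾱ,β̄)`-block-`k`-fair ranking that moreover preserves the intra-group orderings of `π`. -/
theorem exists_closest_blockfair_preserving_intragroup {d g : ℕ} (π : Equiv.Perm (Fin d))
    (G : Fin g → Finset (Fin d)) (hpart : ∀ a : Fin d, ∃! i : Fin g, a ∈ G i)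
    (α β : Fin g → ℝ) (hα : ∀ i, 0 ≤ α i ∧ α i ≤ 1) (hβ : ∀ i, 0 ≤ β i ∧ β i ≤ 1)
    (k b : ℕ) (hk : 1 ≤ k ∧ k ≤ d)
    (hbα : ∀ i, ∃ m : ℕ, α i * (b : ℝ) = m) (hbβ : ∀ i, ∃ m : ℕ, β i * (b : ℝ) = m)
    (hex : ∃ σ : Equiv.Perm (Fin d), BlockFair σ G α β k b) :
    ∃ πs : Equiv.Perm (Fin d), BlockFair πs G α β k b ∧
      (∀ σ : Equiv.Perm (Fin d), BlockFair σ G α β k b → kendall π πs ≤ kendall π σ) ∧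
      (∀ i : Fin g, ∀ a ∈ G i, ∀ b' ∈ G i, a ≠ b' →
        (πs.symm a < πs.symm b' ↔ π.symm a < π.symm b')) := by
  classical
  obtain ⟨σ₀, hσ₀⟩ := hex
  obtain ⟨σ, hσ, hmin⟩ := Finset.exists_min_image
    (Finset.univ.filter fun σ : Equiv.Perm (Fin d) => BlockFair σ G α β k b)
    (fun σ => kendall π σ) ⟨σ₀, by simpa using hσ₀⟩
  simp only [Finset.mem_filter, Finset.mem_univ, true_and] at hσ hmin
  have key : ∀ i : Fin g, ∀ a ∈ G i, ∀ c ∈ G i, π.symm a < π.symm c → σ.symm a < σ.symm c := by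
    intro i a ha c hc hlt
    by_contra hnot
    have hne : σ.symm c ≠ σ.symm a := fun h => hlt.ne (by rw [σ.symm.injective h])
    have hinv : σ.symm c < σ.symm a := lt_of_le_of_ne (not_lt.mp hnot) hne
    refine absurd (hmin (Equiv.swap a c * σ) ?_) (not_le.mpr (kendall_swap_lt π σ a c hlt hinv))
    intro l hkl hld hbl j
    have hj : a ∈ G j ↔ c ∈ G j :=
      ⟨fun h => (hpart a).unique ha h ▸ hc, fun h => (hpart c).unique hc h ▸ ha⟩
    rw [prefCount_swap σ (G j) a c hj l]
    exact hσ l hkl hld hbl j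
  refine ⟨σ, hσ, hmin, fun i a ha c hc hne => ⟨fun h => ?_, key i a ha c hc⟩⟩
  by_contra hnot
  have hlt : π.symm c < π.symm a :=
    lt_of_le_of_ne (not_lt.mp hnot) fun h => hne (π.symm.injective h).symm
  exact lt_asymm h (key i c hc a ha hlt)
end

section
/- For every α ∈ (0, 1/10] and β ∈ (0,1) there exists a constant δ > 0, depending only on α and β, with the following property. Let S be a set of n rankings of [d], with groups G₁,…,G_g, ᾱ, β̄ ∈ [0,1]^g and k ∈ [d] such that at least one (ᾱ,β̄)-strict-k-fair ranking exists; let σ* be a strict-fair ranking minimizing Σ_{π∈S} U(π,σ) over all strict-fair rankings, with OPT = Σ_{π∈S} U(π,σ*); let S_f be the set of rankings σ such that, for some π ∈ S, σ is a strict-fair ranking minimizing U(π,·) over all strict-fair rankings; for each π ∈ S fix a longest common subsequence ℓ_π of π and σ*, and for a ∈ [d] let cost(a) = |{π ∈ S : a does not occur in ℓ_π}|; call a ∈ [d] active if cost(a) > α·n and let A be the set of active symbols. If |A| ≥ β·OPT/n, then there exists a ranking σ̃ ∈ S_f with Σ_{π∈S} U(π, σ̃) ≤ (3−δ)·OPT.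 -/
/-!
For `π ∈ S` let `I π` be the set of symbols missing from `ℓ π`, so `|I π| = U(π, σs)`, and let
`τ π` be a strict-fair ranking closest to `π`. Since `σs` is strict-fair,
`U(π, τ π) ≤ U(π, σs) = |I π|`. The symbols outside `I ρ ∪ I π` occur in the order of `σs` in both
`ρ` and `π`, hence `U(ρ, π) ≤ |I ρ| + |I π| - |I ρ ∩ I π|` (`ulam_add_inter_le`). The triangle
inequality gives `U(ρ, τ π) + |I ρ ∩ I π| ≤ |I ρ| + 2 |I π|`, and summing over all `ρ, π ∈ S`,

`∑_π ∑_ρ U(ρ, τ π) + ∑_a cost(a)² ≤ 3 n OPT`,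

because `∑_π ∑_ρ |I ρ ∩ I π| = ∑_a cost(a)²`. The active symbols alone contribute at least
`|A| (αp n)² ≥ αp² βp n OPT` to the sum of squares, so some `π ∈ S` satisfies
`∑_ρ U(ρ, τ π) ≤ (3 - αp² βp) OPT`. Thus `δ = αp² βp` works.
-/

open Finset

/-- The sequence of candidates of the ranking `π`, i.e. `π 0, π 1, …, π (d-1)`. -/
def permList {d : ℕ} (π : Equiv.Perm (Fin d)) : List (Fin d) :=
  (List.finRange d).map π

/-- Length of a longest common subsequence of the two rankings. -/
noncomputable def lcsLen {d : ℕ} (π₁ π₂ : Equiv.Perm (Fin d)) : ℕ :=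
  sSup {n : ℕ | ∃ l : List (Fin d),
    l.Sublist (permList π₁) ∧ l.Sublist (permList π₂) ∧ l.length = n}

/-- Ulam distance between two rankings of `[d]`: `d` minus the length of a longest common
subsequence. -/
noncomputable def ulam {d : ℕ} (π₁ π₂ : Equiv.Perm (Fin d)) : ℕ := d - lcsLen π₁ π₂

/-- `(ᾱ,β̄)`-strict-`k`-fair ranking. -/
def StrictFair {d g : ℕ} (σ : Equiv.Perm (Fin d)) (G : Fin g → Finset (Fin d))
    (α β : Fin g → ℝ) (k : ℕ) : Prop :=
  ∀ ℓ : ℕ, k ≤ ℓ → ℓ ≤ d → ∀ i : Fin g,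
    ⌊α i * (ℓ : ℝ)⌋₊ ≤ prefCount σ (G i) ℓ ∧ prefCount σ (G i) ℓ ≤ ⌈β i * (ℓ : ℝ)⌉₊

lemma permList_nodup {d : ℕ} (π : Equiv.Perm (Fin d)) : (permList π).Nodup :=
  (List.nodup_finRange d).map π.injective

lemma permList_length {d : ℕ} (π : Equiv.Perm (Fin d)) : (permList π).length = d := by
  simp [permList]

lemma lcsLen_bddAbove {d : ℕ} (π₁ π₂ : Equiv.Perm (Fin d)) :
    BddAbove {n : ℕ | ∃ l : List (Fin d),
      l.Sublist (permList π₁) ∧ l.Sublist (permList π₂) ∧ l.length = n} := by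
  refine ⟨d, ?_⟩
  rintro n ⟨l, h, -, rfl⟩
  simpa [permList_length] using h.length_le

lemma le_lcsLen {d : ℕ} {π₁ π₂ : Equiv.Perm (Fin d)} {l : List (Fin d)}
    (h₁ : l.Sublist (permList π₁)) (h₂ : l.Sublist (permList π₂)) :
    l.length ≤ lcsLen π₁ π₂ :=
  le_csSup (lcsLen_bddAbove π₁ π₂) ⟨l, h₁, h₂, rfl⟩

lemma exists_lcs {d : ℕ} (π₁ π₂ : Equiv.Perm (Fin d)) :
    ∃ l : List (Fin d), l.Sublist (permList π₁) ∧ l.Sublist (permList π₂) ∧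
      l.length = lcsLen π₁ π₂ :=
  Nat.sSup_mem (s := {n : ℕ | ∃ l : List (Fin d),
    l.Sublist (permList π₁) ∧ l.Sublist (permList π₂) ∧ l.length = n})
    ⟨0, [], by simp⟩ (lcsLen_bddAbove π₁ π₂)

/-- The symbols that do not occur in `l`. -/
def missed {d : ℕ} (l : List (Fin d)) : Finset (Fin d) := univ.filter fun a => a ∉ l

lemma card_missed {d : ℕ} {l : List (Fin d)} (h : l.Nodup) :
    (missed l).card = d - l.length := by
  have : missed l = l.toFinsetᶜ := by ext; simp [missed]
  rw [this, card_compl, List.toFinset_card_of_nodup h, Fintype.card_fin]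

/-- A sublist of a duplicate-free list is determined by its set of elements. -/
lemma filter_mem_of_sublist {γ : Type*} [DecidableEq γ] {l L : List γ} (hL : L.Nodup)
    (h : l.Sublist L) : L.filter (fun a => decide (a ∈ l)) = l := by
  induction h with
  | slnil => rfl
  | @cons l₁ l₂ a h ih =>
    rw [List.nodup_cons] at hL
    have : a ∉ l₁ := fun ha => hL.1 (h.subset ha)
    simp [this, ih hL.2]
  | @cons_cons l₁ l₂ a h ih =>
    rw [List.nodup_cons] at hL
    rw [List.filter_cons_of_pos (by simp)]
    congr 1
    conv_rhs => rw [← ih hL.2]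
    refine List.filter_congr fun x hx => ?_
    have : x ≠ a := fun e => hL.1 (e ▸ hx)
    simp [this]

/-- The symbols lying both in a common subsequence of `ρ, σ` and in one of `π, σ` form a common
subsequence of `ρ` and `π`, so `U(ρ, π)` is at most the size of the union of the two missed sets. -/
lemma ulam_add_inter_le {d : ℕ} {ρ σ π : Equiv.Perm (Fin d)} {l₁ l₂ : List (Fin d)}
    (h₁ρ : l₁.Sublist (permList ρ)) (h₁σ : l₁.Sublist (permList σ))
    (h₂π : l₂.Sublist (permList π)) (h₂σ : l₂.Sublist (permList σ)) :
    ulam ρ π + (missed l₁ ∩ missed l₂).card ≤ (missed l₁).card + (missed l₂).card := by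
  set m := l₁.filter (fun a => decide (a ∈ l₂)) with hm
  -- Restricting `σ` to the common symbols gives the same list through `l₁` as through `l₂`.
  have hm' : m = l₂.filter (fun a => decide (a ∈ l₁)) := by
    have e₁ := filter_mem_of_sublist (permList_nodup σ) h₁σ
    have e₂ := filter_mem_of_sublist (permList_nodup σ) h₂σ
    calc m = ((permList σ).filter (fun a => decide (a ∈ l₁))).filter
              (fun a => decide (a ∈ l₂)) := by rw [e₁]
      _ = ((permList σ).filter (fun a => decide (a ∈ l₂))).filter
              (fun a => decide (a ∈ l₁)) := by
            rw [List.filter_filter, List.filter_filter]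
            exact List.filter_congr fun x _ => Bool.and_comm _ _
      _ = _ := by rw [e₂]
  have hmρ : m.Sublist (permList ρ) := List.filter_sublist.trans h₁ρ
  have hmπ : m.Sublist (permList π) := hm' ▸ List.filter_sublist.trans h₂π
  have hle := le_lcsLen hmρ hmπ
  have hu : missed m = missed l₁ ∪ missed l₂ := by
    ext a
    simp only [missed, hm, List.mem_filter, mem_filter, mem_union, mem_univ, true_and,
      decide_eq_true_eq]
    tauto
  have hc := card_missed (hmρ.nodup (permList_nodup ρ))
  rw [hu] at hc
  have := card_union_add_card_inter (missed l₁) (missed l₂)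
  unfold ulam
  omega

lemma ulam_triangle {d : ℕ} (ρ σ π : Equiv.Perm (Fin d)) :
    ulam ρ π ≤ ulam ρ σ + ulam σ π := by
  obtain ⟨l₁, a₁, b₁, c₁⟩ := exists_lcs ρ σ
  obtain ⟨l₂, a₂, b₂, c₂⟩ := exists_lcs σ π
  have h := ulam_add_inter_le a₁ b₁ b₂ a₂
  rw [card_missed (a₁.nodup (permList_nodup _)), card_missed (a₂.nodup (permList_nodup _)),
    c₁, c₂] at h
  exact (Nat.le_add_right _ _).trans h

/-- Double counting of the triples `(π, ρ, a)` with `a ∈ I ρ ∩ I π`. -/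
lemma sum_sum_card_inter {ι γ : Type*} [Fintype γ] [DecidableEq γ] (S : Finset ι)
    (I : ι → Finset γ) :
    ∑ π ∈ S, ∑ ρ ∈ S, (I ρ ∩ I π).card = ∑ a, (S.filter fun π => a ∈ I π).card ^ 2 := by
  have h : ∀ π ρ, (I ρ ∩ I π).card =
      ∑ a, (if a ∈ I π then 1 else 0) * (if a ∈ I ρ then 1 else 0) := by
    intro π ρ
    have : I ρ ∩ I π = univ.filter fun a => a ∈ I π ∧ a ∈ I ρ := by
      ext; simp [and_comm]
    rw [this, card_filter]
    refine sum_congr rfl fun a _ => ?_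
    by_cases h1 : a ∈ I π <;> simp [h1]
  simp_rw [h]
  calc _ = ∑ π ∈ S, ∑ a, ∑ ρ ∈ S,
        (if a ∈ I π then 1 else 0) * (if a ∈ I ρ then 1 else 0) :=
        sum_congr rfl fun _ _ => sum_comm
    _ = ∑ a, ∑ π ∈ S, ∑ ρ ∈ S,
        (if a ∈ I π then 1 else 0) * (if a ∈ I ρ then 1 else 0) := sum_comm
    _ = _ := sum_congr rfl fun a _ => by rw [← sum_mul_sum, card_filter, sq]

/-- Case of many active symbols: for every `αp ∈ (0,1/10]` and `βp ∈ (0,1)` there is a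
`δ > 0` (depending only on `αp, βp`) such that whenever the set `A` of active symbols (those
missed by the chosen optimal common subsequences `ℓ π` for more than `αp·n` of the `n` input
rankings) has size at least `βp·OPT/n`, some closest strict-fair ranking `σ̃` of one of the
inputs satisfies `∑_{π∈S} U(π,σ̃) ≤ (3−δ)·OPT`. -/
theorem active_case_three_minus_delta (αp βp : ℝ)
    (hαp : 0 < αp ∧ αp ≤ 1 / 10) (hβp : 0 < βp ∧ βp < 1) :
    ∃ δ : ℝ, 0 < δ ∧
      ∀ (d g n : ℕ), 0 < n →
      ∀ (S : Finset (Equiv.Perm (Fin d))), S.card = n →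
      ∀ (G : Fin g → Finset (Fin d)), (∀ a : Fin d, ∃! i : Fin g, a ∈ G i) →
      ∀ (α β : Fin g → ℝ), (∀ i, 0 ≤ α i ∧ α i ≤ 1) → (∀ i, 0 ≤ β i ∧ β i ≤ 1) →
      ∀ (k : ℕ), 1 ≤ k ∧ k ≤ d →
      ∀ (σs : Equiv.Perm (Fin d)), StrictFair σs G α β k →
      (∀ σ : Equiv.Perm (Fin d), StrictFair σ G α β k →
        ∑ π ∈ S, ulam π σs ≤ ∑ π ∈ S, ulam π σ) →
      ∀ (ℓ : Equiv.Perm (Fin d) → List (Fin d)),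
      (∀ π ∈ S, (ℓ π).Sublist (permList π) ∧ (ℓ π).Sublist (permList σs) ∧
        (ℓ π).length = lcsLen π σs) →
      ∀ (A : Finset (Fin d)),
      (∀ a : Fin d, a ∈ A ↔ αp * n < ((S.filter fun π => a ∉ ℓ π).card : ℝ)) →
      βp * ((∑ π ∈ S, ulam π σs : ℕ) : ℝ) / n ≤ (A.card : ℝ) →
      ∃ σt : Equiv.Perm (Fin d),
        (∃ π ∈ S, StrictFair σt G α β k ∧
          ∀ σ'' : Equiv.Perm (Fin d), StrictFair σ'' G α β k → ulam π σt ≤ ulam π σ'') ∧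
        ((∑ π ∈ S, ulam π σt : ℕ) : ℝ) ≤ (3 - δ) * ((∑ π ∈ S, ulam π σs : ℕ) : ℝ) := by
  obtain ⟨hα0, -⟩ := hαp
  obtain ⟨hβ0, -⟩ := hβp
  refine ⟨αp ^ 2 * βp, by positivity, ?_⟩
  intro d g n hn S hS G _ α β _ _ k _ σs hfair _ ℓ hℓ A hA hAcard
  set OPT := ∑ π ∈ S, ulam π σs with hOPT
  have hτ : ∀ π : Equiv.Perm (Fin d), ∃ τ, StrictFair τ G α β k ∧
      ∀ σ'', StrictFair σ'' G α β k → ulam π τ ≤ ulam π σ'' := by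
    intro π
    obtain ⟨τ, h1, h2⟩ := Set.exists_min_image {σ | StrictFair σ G α β k} (ulam π)
      (Set.toFinite _) ⟨σs, hfair⟩
    exact ⟨τ, h1, h2⟩
  choose τ hτf hτm using hτ
  have hI : ∀ π ∈ S, (missed (ℓ π)).card = ulam π σs := by
    intro π hπ
    obtain ⟨h1, -, h3⟩ := hℓ π hπ
    rw [card_missed (h1.nodup (permList_nodup _)), h3, ulam]
  have hpair : ∀ π ∈ S, ∀ ρ ∈ S,
      ulam ρ (τ π) + (missed (ℓ ρ) ∩ missed (ℓ π)).card ≤ ulam ρ σs + 2 * ulam π σs := by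
    intro π hπ ρ hρ
    have h1 := ulam_triangle ρ π (τ π)
    have h2 := hτm π σs hfair
    have h3 := ulam_add_inter_le (hℓ ρ hρ).1 (hℓ ρ hρ).2.1 (hℓ π hπ).1 (hℓ π hπ).2.1
    rw [hI π hπ, hI ρ hρ] at h3
    omega
  have htotal : ∑ π ∈ S, ∑ ρ ∈ S, ulam ρ (τ π) +
      ∑ a, (S.filter fun π => a ∉ ℓ π).card ^ 2 ≤ 3 * n * OPT := by
    have h := sum_le_sum fun π hπ => sum_le_sum (hpair π hπ)
    simp only [sum_add_distrib, sum_const, hS, smul_eq_mul, ← mul_sum, ← hOPT] at h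
    rw [sum_sum_card_inter] at h
    simp only [missed, mem_filter, mem_univ, true_and] at h
    linarith
  have hn' : (0 : ℝ) < n := by exact_mod_cast hn
  have hsq : αp ^ 2 * βp * n * (OPT : ℝ) ≤
      ((∑ a, (S.filter fun π => a ∉ ℓ π).card ^ 2 : ℕ) : ℝ) := by
    push_cast
    calc αp ^ 2 * βp * n * (OPT : ℝ) = (βp * OPT / n) * (αp * n) ^ 2 := by field_simp
      _ ≤ A.card * (αp * n) ^ 2 := by gcongr
      _ = ∑ _a ∈ A, (αp * n) ^ 2 := by rw [sum_const, nsmul_eq_mul]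
      _ ≤ ∑ a ∈ A, ((S.filter fun π => a ∉ ℓ π).card : ℝ) ^ 2 :=
          sum_le_sum fun a ha => pow_le_pow_left₀ (by positivity) ((hA a).1 ha).le 2
      _ ≤ _ := sum_le_sum_of_subset_of_nonneg (subset_univ _) fun _ _ _ => by positivity
  have htotal' : ∑ π ∈ S, ((∑ ρ ∈ S, ulam ρ (τ π) : ℕ) : ℝ) ≤
      ∑ _π ∈ S, (3 - αp ^ 2 * βp) * (OPT : ℝ) := by
    rw [sum_const, hS, nsmul_eq_mul, ← Nat.cast_sum]
    have h : ((∑ π ∈ S, ∑ ρ ∈ S, ulam ρ (τ π) : ℕ) : ℝ) +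
        ((∑ a, (S.filter fun π => a ∉ ℓ π).card ^ 2 : ℕ) : ℝ) ≤ 3 * n * OPT := by
      exact_mod_cast htotal
    linarith
  obtain ⟨π, hπ, h⟩ := exists_le_of_sum_le (card_pos.1 (hS ▸ hn)) htotal'
  exact ⟨τ π, ⟨π, hπ, hτf π, hτm π⟩, h⟩
end
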